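/- The vectors of norm 8/5 in the dual lattice of A_4^∨(5) fall into exactly 20 classes modulo A_4^∨, each class containing exactly 3 such vectors: for every a ∈ A_4 with ⟨a,a⟩ = 8, the set {b ∈ A_4 : ⟨b,b⟩ = 8 and (a − b)/5 ∈ A_4^∨} has exactly 3 elements, and the image of {a ∈ A_4 : ⟨a,a⟩ = 8} in D under a ↦ a/5 + A_4^∨ has exactly 20 elements. -/

import Mathlib

/-!
The quotient `A₄/5A₄^∨` is detected by residues modulo `5`: a vector `x` of sum zero lies in `A₄^∨`
iff all differences `xᵢ - x₀` are integers (`mem_A4dual_iff`), so `a/5` and `b/5` are congruent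
modulo `A₄^∨` iff `a - b` has all its coordinates congruent modulo `5`.

A vector of norm `8` in `A₄` has entries in `{-2, …, 2}`, so there are finitely many (`shell`), and
enumeration gives `60`: the `20` permutations of `(2,-2,0,0,0)` and the `40` permutations of
`±(2,1,-1,-1,-1)`. Shifting `(2,-2,0,0,0)` by `±(1,1,1,1,1)` and reducing modulo `5` gives
`(-2,-1,1,1,1)` and `(1,2,-1,-1,-1)`, while a shift by `±(2,2,2,2,2)` gives only longer vectors;
the class of `(2,-2,0,0,0)` is thus these three vectors, the classes of its `20` permutations
exhaust the `60` vectors, and every class has `3` elements (`card_class`, checked by enumeration).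
The number of classes is then `60 / 3 = 20`, by counting `shell` along the fibres of the map to the
quotient.
-/

open scoped BigOperators

noncomputable section

/-- The standard bilinear form `⟨x,y⟩ = ∑ xᵢ yᵢ` on `ℚ^5`. -/
def form (x y : Fin 5 → ℚ) : ℚ := ∑ i, x i * y i

/-- The root lattice `A₄ = {a ∈ ℤ^5 : a₁ + ⋯ + a₅ = 0}` inside `ℚ^5`. -/
def A4 : AddSubgroup (Fin 5 → ℚ) where
  carrier := {a | (∀ i, ∃ n : ℤ, a i = (n : ℚ)) ∧ ∑ i, a i = 0}
  zero_mem' := ⟨fun _ => ⟨0, by simp⟩, by simp⟩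
  add_mem' := by
    rintro a b ⟨ha, ha0⟩ ⟨hb, hb0⟩
    constructor
    · intro i
      obtain ⟨n, hn⟩ := ha i
      obtain ⟨m, hm⟩ := hb i
      exact ⟨n + m, by push_cast [Pi.add_apply, hn, hm]; ring⟩
    · simp [Pi.add_apply, Finset.sum_add_distrib, ha0, hb0]
  neg_mem' := by
    rintro a ⟨ha, ha0⟩
    constructor
    · intro i
      obtain ⟨n, hn⟩ := ha i
      exact ⟨-n, by push_cast [Pi.neg_apply, hn]; ring⟩
    · simp [Pi.neg_apply, Finset.sum_neg_distrib, ha0]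

/-- The fundamental weight `w₁ = (4,-1,-1,-1,-1)/5` of `A₄`. -/
def w1 : Fin 5 → ℚ := ![4/5, -1/5, -1/5, -1/5, -1/5]
/-- The fundamental weight `w₂ = (3,3,-2,-2,-2)/5` of `A₄`. -/
def w2 : Fin 5 → ℚ := ![3/5, 3/5, -2/5, -2/5, -2/5]
/-- The fundamental weight `w₃ = (2,2,2,-3,-3)/5` of `A₄`. -/
def w3 : Fin 5 → ℚ := ![2/5, 2/5, 2/5, -3/5, -3/5]
/-- The fundamental weight `w₄ = (1,1,1,1,-4)/5` of `A₄`. -/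
def w4 : Fin 5 → ℚ := ![1/5, 1/5, 1/5, 1/5, -4/5]

/-- The weight lattice `A₄^∨ = ℤw₁ + ℤw₂ + ℤw₃ + ℤw₄`.  The rescaled lattice `A₄^∨(5)`
is this group equipped with the bilinear form `5⟨·,·⟩`. -/
def A4dual : AddSubgroup (Fin 5 → ℚ) := AddSubgroup.closure {w1, w2, w3, w4}

/-- The dual lattice `(1/5)A₄ = {a/5 : a ∈ A₄}` of `A₄^∨(5)`. -/
def fifthA4 : AddSubgroup (Fin 5 → ℚ) :=
  A4.map (DistribMulAction.toAddMonoidHom (Fin 5 → ℚ) ((5 : ℚ)⁻¹))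

/-- The hyperplane `V = {x ∈ ℚ^5 : x₁ + ⋯ + x₅ = 0}`. -/
def V0 : Submodule ℚ (Fin 5 → ℚ) where
  carrier := {x | ∑ i, x i = 0}
  zero_mem' := by simp
  add_mem' := by
    intro a b ha hb
    simp only [Set.mem_setOf_eq] at *
    simp [Pi.add_apply, Finset.sum_add_distrib, ha, hb]
  smul_mem' := by
    intro c a ha
    simp only [Set.mem_setOf_eq] at *
    simp [Pi.smul_apply, ← Finset.mul_sum, ha]

/-- The discriminant group `D = ((1/5)A₄)/A₄^∨` of the lattice `A₄^∨(5)`. -/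
abbrev Disc := fifthA4 ⧸ (A4dual.addSubgroupOf fifthA4)

/-- The vectors of norm `8` in `A₄`, with integer coordinates; the bound `|zᵢ| ≤ 2` is no
restriction because `3² > 8`. -/
def shell : Finset (Fin 5 → ℤ) :=
  (Fintype.piFinset fun _ => Finset.Icc (-2) 2).filter
    fun z => ∑ i, z i = 0 ∧ ∑ i, z i * z i = 8

/-- The coordinates of `z - w` are all congruent modulo `5`. For `z`, `w` of sum zero this is the
congruence of `z/5` and `w/5` modulo `A₄^∨`. -/
def Cong (z w : Fin 5 → ℤ) : Prop := ∀ i, (5 : ℤ) ∣ (z i - w i) - (z 0 - w 0)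

instance (z w : Fin 5 → ℤ) : Decidable (Cong z w) := by unfold Cong; infer_instance

theorem card_shell : shell.card = 60 := by decide +kernel

theorem card_class : ∀ z ∈ shell, (shell.filter (Cong z)).card = 3 := by decide +kernel

/-- The inclusion `ℤ^5 ⊆ ℚ^5`. -/
def toQ (z : Fin 5 → ℤ) : Fin 5 → ℚ := fun i => (z i : ℚ)

theorem toQ_injective : Function.Injective toQ := fun z w h => by
  funext i
  exact Int.cast_injective (congrFun h i)

theorem mem_shell_iff (z : Fin 5 → ℤ) :
    z ∈ shell ↔ ∑ i, z i = 0 ∧ ∑ i, z i * z i = 8 := by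
  simp only [shell, Finset.mem_filter, Fintype.mem_piFinset, Finset.mem_Icc, and_iff_right_iff_imp]
  rintro ⟨-, h⟩ i
  have hi : z i * z i ≤ 8 := h ▸ Finset.single_le_sum
    (f := fun i => z i * z i) (fun j _ => mul_self_nonneg (z j)) (Finset.mem_univ i)
  constructor <;> nlinarith

theorem norm_eight_eq : {a : Fin 5 → ℚ | a ∈ A4 ∧ form a a = 8} = toQ '' (shell : Set _) := by
  ext a
  constructor
  · rintro ⟨⟨hint, hsum⟩, hnorm⟩
    choose z hz using hint
    obtain rfl : a = toQ z := funext hz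
    refine ⟨z, (mem_shell_iff z).2 ⟨?_, ?_⟩, rfl⟩
    · simp only [toQ] at hsum
      exact_mod_cast hsum
    · simp only [form, toQ] at hnorm
      exact_mod_cast hnorm
  · rintro ⟨z, hz, rfl⟩
    obtain ⟨hsum, hnorm⟩ := (mem_shell_iff z).1 hz
    refine ⟨⟨fun i => ⟨z i, rfl⟩, ?_⟩, ?_⟩
    · simp only [toQ]
      exact_mod_cast hsum
    · simp only [form, toQ]
      exact_mod_cast hnorm

theorem mem_A4dual_iff (x : Fin 5 → ℚ) :
    x ∈ A4dual ↔ ∑ i, x i = 0 ∧ ∀ i, ∃ n : ℤ, x i - x 0 = n := by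
  constructor
  · intro hx
    induction hx using AddSubgroup.closure_induction with
    | mem x hx =>
      -- Each coordinate difference of a fundamental weight is `0` or `-1`.
      have key : ∀ y : Fin 5 → ℚ, (∑ i, y i = 0 ∧ ∀ i, y i - y 0 = 0 ∨ y i - y 0 = -1) →
          ∑ i, y i = 0 ∧ ∀ i, ∃ n : ℤ, y i - y 0 = n := fun y h =>
        ⟨h.1, fun i => (h.2 i).elim (fun h => ⟨0, by simp [h]⟩) (fun h => ⟨-1, by simp [h]⟩)⟩
      apply key
      rcases hx with rfl | rfl | rfl | rfl <;>
        simp [w1, w2, w3, w4, Fin.sum_univ_five, Fin.forall_fin_succ] <;> norm_num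
    | zero => exact ⟨by simp, fun i => ⟨0, by simp⟩⟩
    | add x y _ _ hx hy =>
      refine ⟨by simp [Finset.sum_add_distrib, hx.1, hy.1], fun i => ?_⟩
      obtain ⟨n, hn⟩ := hx.2 i
      obtain ⟨m, hm⟩ := hy.2 i
      exact ⟨n + m, by push_cast [Pi.add_apply, ← hn, ← hm]; ring⟩
    | neg x _ hx =>
      refine ⟨by simp [hx.1], fun i => ?_⟩
      obtain ⟨n, hn⟩ := hx.2 i
      exact ⟨-n, by push_cast [Pi.neg_apply, ← hn]; ring⟩
  · rintro ⟨hsum, h⟩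
    obtain ⟨n1, h1⟩ := h 1
    obtain ⟨n2, h2⟩ := h 2
    obtain ⟨n3, h3⟩ := h 3
    obtain ⟨n4, h4⟩ := h 4
    -- The coefficient of `wᵢ` is the pairing with the `i`-th simple root, `xᵢ - xᵢ₊₁`.
    have hx : x = (-n1) • w1 + (n1 - n2) • w2 + (n2 - n3) • w3 + (n3 - n4) • w4 := by
      rw [Fin.sum_univ_five] at hsum
      funext i
      fin_cases i <;> simp [w1, w2, w3, w4] <;> linarith
    have hw : ∀ w ∈ ({w1, w2, w3, w4} : Set (Fin 5 → ℚ)), w ∈ A4dual :=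
      fun w hw => AddSubgroup.subset_closure hw
    rw [hx]
    exact add_mem (add_mem (add_mem (zsmul_mem (hw _ (by simp)) _) (zsmul_mem (hw _ (by simp)) _))
      (zsmul_mem (hw _ (by simp)) _)) (zsmul_mem (hw _ (by simp)) _)

theorem sub_mem_A4dual_iff {z w : Fin 5 → ℤ} (hz : z ∈ shell) (hw : w ∈ shell) :
    (5 : ℚ)⁻¹ • (toQ z - toQ w) ∈ A4dual ↔ Cong z w := by
  have hz0 : ∑ i, (z i : ℚ) = 0 := by exact_mod_cast ((mem_shell_iff z).1 hz).1
  have hw0 : ∑ i, (w i : ℚ) = 0 := by exact_mod_cast ((mem_shell_iff w).1 hw).1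
  have hsum : ∑ i, ((5 : ℚ)⁻¹ • (toQ z - toQ w)) i = 0 := by
    simp [toQ, ← Finset.mul_sum, Finset.sum_sub_distrib, hz0, hw0]
  rw [mem_A4dual_iff, and_iff_right hsum]
  refine forall_congr' fun i => exists_congr fun n => ?_
  simp only [Pi.smul_apply, Pi.sub_apply, toQ, smul_eq_mul]
  rw [← @Int.cast_inj ℚ]
  push_cast
  constructor <;> intro h <;> linarith

/-- The vectors of norm `8/5` in the dual lattice of `A₄^∨(5)` fall
into exactly `20` classes modulo `A₄^∨`, each class containing exactly `3` such
vectors. -/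
theorem norm_eight_fifths_classes :
    (∀ a : Fin 5 → ℚ, a ∈ A4 → form a a = 8 →
      Set.ncard {b : Fin 5 → ℚ | b ∈ A4 ∧ form b b = 8 ∧ (5 : ℚ)⁻¹ • (a - b) ∈ A4dual} = 3) ∧
    Set.ncard ((fun a : Fin 5 → ℚ =>
        (QuotientAddGroup.mk ((5 : ℚ)⁻¹ • a) : (Fin 5 → ℚ) ⧸ A4dual)) ''
      {a | a ∈ A4 ∧ form a a = 8}) = 20 := by
  constructor
  · intro a ha hnorm
    obtain ⟨z, hz, rfl⟩ : a ∈ toQ '' (shell : Set _) := norm_eight_eq ▸ ⟨ha, hnorm⟩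
    have hset : {b : Fin 5 → ℚ | b ∈ A4 ∧ form b b = 8 ∧ (5 : ℚ)⁻¹ • (toQ z - b) ∈ A4dual} =
        toQ '' (shell.filter (Cong z) : Set _) := by
      ext b
      constructor
      · rintro ⟨hb, hb8, hd⟩
        obtain ⟨w, hw, rfl⟩ : b ∈ toQ '' (shell : Set _) := norm_eight_eq ▸ ⟨hb, hb8⟩
        exact ⟨w, Finset.mem_filter.2 ⟨hw, (sub_mem_A4dual_iff hz hw).1 hd⟩, rfl⟩
      · rintro ⟨w, hw, rfl⟩
        obtain ⟨hw, hc⟩ := Finset.mem_filter.1 hw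
        have hb : toQ w ∈ {a : Fin 5 → ℚ | a ∈ A4 ∧ form a a = 8} :=
          norm_eight_eq ▸ ⟨w, hw, rfl⟩
        exact ⟨hb.1, hb.2, (sub_mem_A4dual_iff hz hw).2 hc⟩
    rw [hset, Set.ncard_image_of_injective _ toQ_injective, Set.ncard_coe_finset, card_class z hz]
  · classical
    rw [norm_eight_eq, Set.image_image, ← Finset.coe_image, Set.ncard_coe_finset]
    set f : (Fin 5 → ℤ) → (Fin 5 → ℚ) ⧸ A4dual :=
      fun z => QuotientAddGroup.mk ((5 : ℚ)⁻¹ • toQ z) with hf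
    have hfib : ∀ c ∈ shell.image f, (shell.filter fun w => f w = c).card = 3 := by
      intro c hc
      obtain ⟨z, hz, rfl⟩ := Finset.mem_image.1 hc
      rw [← card_class z hz]
      congr 1
      refine Finset.filter_congr fun w hw => ?_
      rw [← sub_mem_A4dual_iff hz hw, eq_comm, hf, QuotientAddGroup.eq, ← neg_mem_iff]
      simp only [smul_sub, neg_add_rev, neg_neg]
      rw [neg_add_eq_sub]
    have hcount := Finset.card_eq_sum_card_image f shell
    rw [Finset.sum_congr rfl hfib, card_shell, Finset.sum_const, smul_eq_mul] at hcount
    omega
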